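/- Let n ≥ 6 and let K be any finite-index subgroup of Aut(F_n), the automorphism group of the free group on n generators. Then there is no injective group homomorphism φ from K into Diff²₊(I) whose image is fully supported, i.e., such that no nontrivial element of φ(K) fixes pointwise a nondegenerate interval (equivalently, Fix(φ(k)) has empty interior for every k with φ(k) ≠ id). -/

import Mathlib

/-- A permutation of `ℝ` representing an orientation-preserving C² diffeomorphism of
`I = [0,1]`: it is the identity off `[0,1]`, is C² on `[0,1]`, and has positive
(one-sided, at the endpoints) derivative on `[0,1]`. -/
def IsDiffI (f : Equiv.Perm ℝ) : Prop :=
  (∀ x, x ∉ Set.Icc (0 : ℝ) 1 → f x = x) ∧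
  ContDiffOn ℝ 2 f (Set.Icc 0 1) ∧
  ∀ x ∈ Set.Icc (0 : ℝ) 1, 0 < derivWithin f (Set.Icc 0 1) x

section
theorem holder_aux {G : Type*} [Group G] [LinearOrder G] [MulLeftStrictMono G]
    [MulRightStrictMono G] [MulLeftMono G] [MulRightMono G]
    (arch : ∀ a b : G, 1 < a → ∃ n : ℕ, b ≤ a ^ n) (x y : G) : x * y = y * x := by
  have fl : ∀ d g : G, 1 < d → ∃ k : ℤ, d ^ k ≤ g ∧ g < d ^ (k + 1) := by
    intro d g hd
    obtain ⟨N, hN⟩ := arch d g hd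
    obtain ⟨M, hM⟩ := arch d g⁻¹ hd
    have hmono : StrictMono (fun k : ℤ => d ^ k) := by
      apply strictMono_int_of_lt_succ
      intro k
      show d ^ k < d ^ (k + 1)
      rw [zpow_add_one]
      exact lt_mul_of_one_lt_right' _ hd
    obtain ⟨k, hk, hk'⟩ := Int.exists_greatest_of_bdd (P := fun k : ℤ => d ^ k ≤ g)
      ⟨N, fun z hz => by
        apply hmono.le_iff_le.1
        simpa using hz.trans hN⟩
      ⟨-M, by
        rw [zpow_neg, zpow_natCast]
        exact inv_le_of_inv_le' hM⟩
    refine ⟨k, hk, ?_⟩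
    by_contra hcon
    have := hk' (k + 1) (not_lt.1 hcon)
    omega
  by_cases hA : ∃ d : G, 1 < d ∧ ∀ e : G, 1 < e → d ≤ e
  · obtain ⟨d, hd, hmin⟩ := hA
    have gen : ∀ g : G, ∃ k : ℤ, g = d ^ k := by
      intro g
      obtain ⟨k, h1, h2⟩ := fl d g hd
      refine ⟨k, ?_⟩
      by_contra hne
      have h3 : d ^ k < g := lt_of_le_of_ne h1 (Ne.symm hne)
      have h4 : 1 < (d ^ k)⁻¹ * g := by
        have := mul_lt_mul_right h3 (d ^ k)⁻¹
        simpa using this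
      have h5 := hmin _ h4
      have h6 : d ^ k * d ≤ d ^ k * ((d ^ k)⁻¹ * g) := mul_le_mul_right h5 _
      rw [mul_inv_cancel_left, ← zpow_add_one] at h6
      exact absurd h2 (not_lt.2 h6)
    obtain ⟨i, rfl⟩ := gen x
    obtain ⟨j, rfl⟩ := gen y
    rw [← zpow_add, ← zpow_add, add_comm]
  · push Not at hA
    have key : ∀ x y : G, ¬ x * y < y * x := by
      intro x y hlt
      set c := (y * x) * (x * y)⁻¹ with hc
      have hc1 : 1 < c := by
        have := mul_lt_mul_left hlt (x * y)⁻¹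
        simpa [hc] using this
      obtain ⟨e, he1, hec⟩ := hA c hc1
      obtain ⟨d, hd, hdc⟩ : ∃ d : G, 1 < d ∧ d * d ≤ c := by
        by_cases h : e * e ≤ c
        · exact ⟨e, he1, h⟩
        · push Not at h
          have h1 : 1 < c * e⁻¹ := by
            have := mul_lt_mul_left hec e⁻¹
            simpa using this
          have h2 : c * e⁻¹ < e := by
            have := mul_lt_mul_left h e⁻¹
            simpa using this
          refine ⟨c * e⁻¹, h1, ?_⟩
          calc c * e⁻¹ * (c * e⁻¹) ≤ c * e⁻¹ * e := mul_le_mul_right h2.le _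
            _ = c := by group
      obtain ⟨m, hm1, hm2⟩ := fl d x hd
      obtain ⟨n, hn1, hn2⟩ := fl d y hd
      have h1 : y * x < d ^ (n + 1) * d ^ (m + 1) := mul_lt_mul_of_lt_of_lt hn2 hm2
      have h2 : d ^ m * d ^ n ≤ x * y := mul_le_mul' hm1 hn1
      have h3 : c * (x * y) < d * d * (x * y) := by
        calc c * (x * y) = y * x := by rw [hc]; group
          _ < d ^ (n + 1) * d ^ (m + 1) := h1
          _ = d * d * (d ^ m * d ^ n) := by
            rw [← zpow_add, ← zpow_add, ← sq, ← zpow_natCast, ← zpow_add]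
            congr 1; push_cast; ring
          _ ≤ d * d * (x * y) := mul_le_mul_right h2 _
      have h4 : c < d * d := lt_of_mul_lt_mul_right' h3
      exact absurd h4 (not_lt.2 hdc)
    exact le_antisymm (not_lt.1 (key y x)) (not_lt.1 (key x y))

/-- x_i ↦ x_i x_j^m -/
def trHom {n : ℕ} (i j : Fin n) (m : ℤ) : FreeGroup (Fin n) →* FreeGroup (Fin n) :=
  FreeGroup.lift fun k => if k = i then FreeGroup.of i * FreeGroup.of j ^ m else FreeGroup.of k

theorem trHom_comp {n : ℕ} {i j : Fin n} (h : i ≠ j) (m l : ℤ) :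
    (trHom i j m).comp (trHom i j l) = trHom i j (m + l) := by
  ext k
  by_cases hk : k = i
  · simp [trHom, hk, h.symm, mul_assoc, zpow_add]
  · simp [trHom, hk]

theorem trHom_zero {n : ℕ} {i j : Fin n} : trHom i j 0 = MonoidHom.id _ := by
  ext k
  by_cases hk : k = i
  · simp [trHom, hk]
  · simp [trHom, hk]

def tr {n : ℕ} (i j : Fin n) (h : i ≠ j) (m : ℤ) : MulAut (FreeGroup (Fin n)) :=
  MonoidHom.toMulEquiv (trHom i j m) (trHom i j (-m))
    (by rw [trHom_comp h]; simp [trHom_zero]) (by rw [trHom_comp h]; simp [trHom_zero])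

theorem tr_pow {n : ℕ} (i j : Fin n) (h : i ≠ j) (m : ℕ) : tr i j h 1 ^ m = tr i j h m := by
  induction m with
  | zero =>
    ext k
    simp [tr, trHom_zero]
  | succ m ih =>
    rw [pow_succ, ih]
    ext k
    have := DFunLike.congr_fun (trHom_comp h m 1) k
    simpa [tr] using this

theorem tr_apply {n : ℕ} (i j : Fin n) (h : i ≠ j) (m : ℤ) (k : Fin n) :
    tr i j h m (FreeGroup.of k) =
      if k = i then FreeGroup.of i * FreeGroup.of j ^ m else FreeGroup.of k := by
  simp [tr, trHom]

theorem mulAut_ext {n : ℕ} {a b : MulAut (FreeGroup (Fin n))}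
    (h : ∀ k, a (FreeGroup.of k) = b (FreeGroup.of k)) : a = b := by
  have : a.toMonoidHom = b.toMonoidHom := by
    ext k; exact h k
  ext x
  exact DFunLike.congr_fun this x

theorem group_part (n : ℕ) (hn : 6 ≤ n)
    (K : Subgroup (MulAut (FreeGroup (Fin n)))) (hK : K.FiniteIndex) :
    ∃ f g h : K, f ≠ 1 ∧ f * g = g * f ∧ f * h = h * f ∧ g * h ≠ h * g := by
  have pw : ∀ a : MulAut (FreeGroup (Fin n)), ∃ m : ℕ, 0 < m ∧ a ^ m ∈ K := by
    intro a
    obtain ⟨m, h1, -, h2⟩ := Subgroup.exists_pow_mem_of_index_ne_zero hK.index_ne_zero a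
    exact ⟨m, h1, h2⟩
  let i0 : Fin n := ⟨0, by omega⟩
  let i1 : Fin n := ⟨1, by omega⟩
  let i2 : Fin n := ⟨2, by omega⟩
  let i3 : Fin n := ⟨3, by omega⟩
  have h01 : i0 ≠ i1 := by simp [i0, i1]
  have h02 : i0 ≠ i2 := by simp [i0, i2]
  have h03 : i0 ≠ i3 := by simp [i0, i3]
  have h12 : i1 ≠ i2 := by simp [i1, i2]
  have h13 : i1 ≠ i3 := by simp [i1, i3]
  have h23 : i2 ≠ i3 := by simp [i2, i3]
  clear_value i0 i1 i2 i3
  obtain ⟨a, ha, hf⟩ := pw (tr i0 i1 h01 1)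
  obtain ⟨b, hb, hg⟩ := pw (tr i2 i3 h23 1)
  obtain ⟨c, hc, hh⟩ := pw (tr i3 i2 h23.symm 1)
  rw [tr_pow] at hf hg hh
  refine ⟨⟨_, hf⟩, ⟨_, hg⟩, ⟨_, hh⟩, ?_, ?_, ?_, ?_⟩
  · intro h
    have h1 := congrArg Subtype.val h
    have h2 := DFunLike.congr_fun h1 (FreeGroup.of i0)
    have h3 := congrArg (FreeGroup.lift (fun k => if k = i1 then Multiplicative.ofAdd (1 : ℤ) else 1)) h2
    simp [tr_apply, h01, ← ofAdd_nsmul, ha.ne'] at h3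
  · apply Subtype.ext
    apply mulAut_ext
    intro k
    simp only [Subgroup.coe_mul, MulAut.mul_apply, tr_apply]
    split_ifs <;> simp_all [tr_apply, h02.symm, h03.symm]
  · apply Subtype.ext
    apply mulAut_ext
    intro k
    simp only [Subgroup.coe_mul, MulAut.mul_apply, tr_apply]
    split_ifs <;> simp_all [tr_apply, h02.symm, h03.symm]
  · intro h
    have h1 := congrArg Subtype.val h
    have h2 := DFunLike.congr_fun h1 (FreeGroup.of i2)
    have h3 := congrArg (FreeGroup.lift (fun k => if k = i2 then Multiplicative.ofAdd (1 : ℤ) else 1)) h2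
    have h4 := congrArg Multiplicative.toAdd h3
    simp [tr_apply, h23, h23.symm] at h4
    omega

open Set Filter Topology

theorem IsDiffI.mem {f : Equiv.Perm ℝ} (hf : IsDiffI f) {x : ℝ} (hx : x ∈ Icc (0 : ℝ) 1) :
    f x ∈ Icc (0 : ℝ) 1 := by
  by_contra h
  have h1 := hf.1 _ h
  have h2 := f.injective h1
  rw [h2] at h
  exact h hx

theorem IsDiffI.mvt {f : Equiv.Perm ℝ} (hf : IsDiffI f) {u v : ℝ} (hu : 0 ≤ u) (huv : u < v)
    (hv : v ≤ 1) : ∃ c ∈ Ioo u v, f v - f u = derivWithin f (Icc 0 1) c * (v - u) := by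
  have hsub : Icc u v ⊆ Icc (0 : ℝ) 1 := Icc_subset_Icc hu hv
  obtain ⟨c, hc, h⟩ := exists_deriv_eq_slope f huv (hf.2.1.continuousOn.mono hsub)
    ((hf.2.1.differentiableOn (by norm_num)).mono (Ioo_subset_Icc_self.trans hsub))
  refine ⟨c, hc, ?_⟩
  have : Icc (0 : ℝ) 1 ∈ 𝓝 c := Icc_mem_nhds (hu.trans_lt hc.1) (hc.2.trans_le hv)
  rw [derivWithin_of_mem_nhds this, h]
  field_simp [sub_ne_zero.2 huv.ne']

theorem IsDiffI.strictMono {f : Equiv.Perm ℝ} (hf : IsDiffI f) : StrictMono f := by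
  intro x y hxy
  by_cases hx : x ∈ Icc (0 : ℝ) 1
  · by_cases hy : y ∈ Icc (0 : ℝ) 1
    · obtain ⟨c, hc, h⟩ := hf.mvt hx.1 hxy hy.2
      have := hf.2.2 c ⟨hx.1.trans hc.1.le, hc.2.le.trans hy.2⟩
      have := mul_pos this (sub_pos.2 hxy)
      linarith
    · rw [hf.1 y hy]
      have := hf.mem hx
      have : 1 < y := by
        by_contra h
        exact hy ⟨hx.1.trans hxy.le, not_lt.1 h⟩
      linarith [(hf.mem hx).2]
  · rw [hf.1 x hx]
    by_cases hy : y ∈ Icc (0 : ℝ) 1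
    · have : x < 0 := by
        by_contra h
        exact hx ⟨not_lt.1 h, hxy.le.trans hy.2⟩
      linarith [(hf.mem hy).1]
    · rwa [hf.1 y hy]

theorem IsDiffI.continuous {f : Equiv.Perm ℝ} (hf : IsDiffI f) : Continuous f :=
  hf.strictMono.monotone.continuous_of_surjective f.surjective

theorem IsDiffI.distortion {f : Equiv.Perm ℝ} (hf : IsDiffI f) : ∃ L : ℝ, 0 ≤ L ∧
    ∀ x ∈ Icc (0 : ℝ) 1, ∀ y ∈ Icc (0 : ℝ) 1,
      derivWithin f (Icc 0 1) x ≤ Real.exp (L * |x - y|) * derivWithin f (Icc 0 1) y := by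
  have hU : UniqueDiffOn ℝ (Icc (0 : ℝ) 1) := uniqueDiffOn_Icc zero_lt_one
  have h1 : ContDiffOn ℝ 1 (derivWithin f (Icc 0 1)) (Icc 0 1) :=
    hf.2.1.derivWithin hU (by norm_num)
  have h2 := h1.log (fun x hx => (hf.2.2 x hx).ne')
  obtain ⟨L, hL⟩ := h2.exists_lipschitzOnWith (by norm_num) (convex_Icc 0 1) isCompact_Icc
  refine ⟨L, L.2, fun x hx y hy => ?_⟩
  have h3 := hL.dist_le_mul x hx y hy
  rw [Real.dist_eq, Real.dist_eq] at h3
  have h4 := (le_abs_self _).trans h3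
  rw [← Real.exp_log (hf.2.2 x hx)]
  rw [← Real.exp_log (hf.2.2 y hy)]
  rw [← Real.exp_add]
  apply Real.exp_le_exp.2
  linarith

/-- iterates of a point moved down -/
theorem IsDiffI.orbit {f : Equiv.Perm ℝ} (hf : IsDiffI f) {p : ℝ} (hp : p ∈ Icc (0 : ℝ) 1)
    (hfp : f p < p) : (∀ n : ℕ, f^[n] p ∈ Icc (0 : ℝ) 1) ∧ StrictAnti (fun n : ℕ => f^[n] p) ∧
    ∃ a ∈ Icc (0 : ℝ) 1, f a = a ∧ a < p ∧ (∀ c, c ≤ p → f c = c → c ≤ a) ∧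
      Tendsto (fun n : ℕ => f^[n] p) atTop (𝓝 a) := by
  have hmem : ∀ n : ℕ, f^[n] p ∈ Icc (0 : ℝ) 1 := by
    intro n
    induction n with
    | zero => simpa using hp
    | succ n ih => rw [Function.iterate_succ_apply']; exact hf.mem ih
  have hanti : StrictAnti (fun n : ℕ => f^[n] p) := by
    apply strictAnti_nat_of_succ_lt
    intro n
    show f^[n+1] p < f^[n] p
    rw [Function.iterate_succ_apply]
    exact hf.strictMono.iterate n hfp
  have hb : BddBelow (range fun n : ℕ => f^[n] p) := ⟨0, by rintro _ ⟨n, rfl⟩; exact (hmem n).1⟩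
  have ht := tendsto_atTop_ciInf hanti.antitone hb
  set a := ⨅ n : ℕ, f^[n] p
  have ha : f a = a := isFixedPt_of_tendsto_iterate ht hf.continuous.continuousAt
  refine ⟨hmem, hanti, a, isClosed_Icc.mem_of_tendsto ht (Eventually.of_forall hmem), ha,
    ?_, ?_, ht⟩
  · exact lt_of_le_of_lt (ciInf_le hb 1) (by simpa using hfp)
  · intro c hc hfc
    apply le_ciInf
    intro n
    have := (hf.strictMono.iterate n).monotone hc
    rwa [Function.iterate_fixed hfc] at this

theorem IsDiffI.iter_distortion {f : Equiv.Perm ℝ} (hf : IsDiffI f) {L : ℝ} (hL : 0 ≤ L)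
    (hLf : ∀ x ∈ Icc (0 : ℝ) 1, ∀ y ∈ Icc (0 : ℝ) 1,
      derivWithin f (Icc 0 1) x ≤ Real.exp (L * |x - y|) * derivWithin f (Icc 0 1) y)
    {p : ℝ} (hp : p ∈ Icc (0 : ℝ) 1) (hfp : f p < p) {u v w z : ℝ}
    (hu : f p ≤ u) (huv : u < v) (hv : v ≤ p) (hw : f p ≤ w) (hwz : w < z) (hz : z ≤ p) (n : ℕ) :
    (v - u) * (f^[n] z - f^[n] w) ≤
      Real.exp (L * (p - f^[n] p)) * ((f^[n] v - f^[n] u) * (z - w)) := by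
  obtain ⟨hmem, hanti, -⟩ := hf.orbit hp hfp
  induction n with
  | zero => simp [mul_comm]
  | succ n ih =>
    have hm := hf.strictMono.iterate n
    have lo : ∀ t, f p ≤ t → f^[n+1] p ≤ f^[n] t := fun t ht => by
      rw [Function.iterate_succ_apply]; exact hm.monotone ht
    have hi : ∀ t, t ≤ p → f^[n] t ≤ f^[n] p := fun t ht => hm.monotone ht
    have hn1 := hmem (n+1)
    have hn0 := hmem n
    obtain ⟨c, hc, hc'⟩ := hf.mvt (hn1.1.trans (lo _ hu)) (hm huv) ((hi _ hv).trans hn0.2)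
    obtain ⟨d, hd, hd'⟩ := hf.mvt (hn1.1.trans (lo _ hw)) (hm hwz) ((hi _ hz).trans hn0.2)
    have lu := lo _ hu
    have lw := lo _ hw
    have hv' := hi _ hv
    have hz' := hi _ hz
    have uv := hm huv
    have wz := hm hwz
    simp only [Function.iterate_succ_apply' f n v, Function.iterate_succ_apply' f n u,
      Function.iterate_succ_apply' f n w, Function.iterate_succ_apply' f n z]
    rw [hc', hd']
    have hcI : c ∈ Icc (0:ℝ) 1 := ⟨by linarith [hc.1, hn1.1], by linarith [hc.2, hn0.2]⟩
    have hdI : d ∈ Icc (0:ℝ) 1 := ⟨by linarith [hd.1, hn1.1], by linarith [hd.2, hn0.2]⟩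
    have hD := hLf d hdI c hcI
    have habs : |d - c| ≤ f^[n] p - f^[n+1] p := by
      rw [abs_le]; constructor <;> linarith [hc.1, hc.2, hd.1, hd.2]
    have hD2 : derivWithin f (Icc 0 1) d ≤
        Real.exp (L * (f^[n] p - f^[n+1] p)) * derivWithin f (Icc 0 1) c :=
      hD.trans (mul_le_mul_of_nonneg_right
        (Real.exp_le_exp.2 (mul_le_mul_of_nonneg_left habs hL)) (hf.2.2 c hcI).le)
    have hE : Real.exp (L * (p - f^[n+1] p)) =
        Real.exp (L * (f^[n] p - f^[n+1] p)) * Real.exp (L * (p - f^[n] p)) := by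
      rw [← Real.exp_add]; congr 1; ring
    rw [hE]
    have h0 : 0 ≤ (v - u) * (f^[n] z - f^[n] w) :=
      mul_nonneg (by linarith) (by linarith)
    have hfin := mul_le_mul hD2 ih h0
      (mul_nonneg (Real.exp_pos _).le (hf.2.2 c hcI).le)
    calc _ = derivWithin f (Icc 0 1) d * ((v - u) * (f^[n] z - f^[n] w)) := by ring
      _ ≤ _ := hfin
      _ = _ := by ring

theorem IsDiffI.uniform_bound {f : Equiv.Perm ℝ} (hf : IsDiffI f) {p : ℝ}
    (hp : p ∈ Icc (0 : ℝ) 1) (hfp : f p < p) : ∃ C : ℝ, 0 ≤ C ∧ ∀ h : Equiv.Perm ℝ, IsDiffI h →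
      (∀ x, h (f x) = f (h x)) → h p = p → ∀ u v, f p ≤ u → u < v → v ≤ p →
      h v - h u ≤ C * (v - u) := by
  obtain ⟨L, hL, hLf⟩ := hf.distortion
  obtain ⟨hmem, hanti, a, haI, hfa, hap, -, hta⟩ := hf.orbit hp hfp
  refine ⟨Real.exp L, (Real.exp_pos _).le, fun h hh hcomm hhp u v hu huv hv => ?_⟩
  have hci : ∀ n x, h (f^[n] x) = f^[n] (h x) := by
    intro n x
    exact (Function.Commute.iterate_right (f := h) (g := f) hcomm n) x
  have hfix : ∀ n, h (f^[n] p) = f^[n] p := fun n => by rw [hci, hhp]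
  have hhfp : h (f p) = f p := by rw [hcomm, hhp]
  set D := derivWithin h (Icc 0 1)
  have hDc : ContinuousOn D (Icc 0 1) :=
    hh.2.1.continuousOn_derivWithin (uniqueDiffOn_Icc zero_lt_one) (by norm_num)
  -- squeeze
  have hta1 := hta.comp (tendsto_add_atTop_nat 1)
  have lim : ∀ c : ℕ → ℝ, (∀ n, f^[n+1] p ≤ c n ∧ c n ≤ f^[n] p) →
      Tendsto (fun n => D (c n)) atTop (𝓝 (D a)) := by
    intro c hc
    have hcI : ∀ n, c n ∈ Icc (0:ℝ) 1 := fun n =>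
      ⟨(hmem (n+1)).1.trans (hc n).1, (hc n).2.trans (hmem n).2⟩
    have ht : Tendsto c atTop (𝓝 a) :=
      tendsto_of_tendsto_of_tendsto_of_le_of_le hta1 hta (fun n => (hc n).1) (fun n => (hc n).2)
    exact (hDc a haI).tendsto.comp
      (tendsto_nhdsWithin_iff.2 ⟨ht, Eventually.of_forall hcI⟩)
  have hDa : D a = 1 := by
    have : ∀ n : ℕ, ∃ c, (f^[n+1] p ≤ c ∧ c ≤ f^[n] p) ∧ D c = 1 := by
      intro n
      have hlt : f^[n+1] p < f^[n] p := hanti (Nat.lt_succ_self n)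
      obtain ⟨c, hc, h1⟩ := hh.mvt (hmem (n+1)).1 hlt (hmem n).2
      refine ⟨c, ⟨hc.1.le, hc.2.le⟩, ?_⟩
      rw [hfix, hfix] at h1
      have : (D c - 1) * (f^[n] p - f^[n+1] p) = 0 := by
        rw [sub_mul, ← h1]; ring
      rcases mul_eq_zero.1 this with h2 | h2
      · linarith
      · linarith
    choose c hc hc1 using this
    have := lim c hc
    simp only [hc1] at this
    exact tendsto_nhds_unique this tendsto_const_nhds |>.symm ▸ rfl
  have hstep : ∀ n : ℕ, ∃ c, (f^[n+1] p ≤ c ∧ c ≤ f^[n] p) ∧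
      h v - h u ≤ Real.exp L * (v - u) * D c := by
    intro n
    have hm := hf.strictMono.iterate n
    have l1 : f^[n+1] p ≤ f^[n] u := by
      rw [Function.iterate_succ_apply]; exact hm.monotone hu
    have l2 : f^[n] v ≤ f^[n] p := hm.monotone hv
    have l3 := hm huv
    obtain ⟨c, hc, h1⟩ := hh.mvt ((hmem (n+1)).1.trans l1) l3 (l2.trans (hmem n).2)
    refine ⟨c, ⟨l1.trans hc.1.le, hc.2.le.trans l2⟩, ?_⟩
    have hhu : f p ≤ h u := by rw [← hhfp]; exact hh.strictMono.monotone hu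
    have hhv : h v ≤ p := by
      calc h v ≤ h p := hh.strictMono.monotone hv
        _ = p := hhp
    have key := hf.iter_distortion hL hLf hp hfp hhu (hh.strictMono huv) hhv hu huv hv n
    rw [← hci, ← hci, h1] at key
    have hE : Real.exp (L * (p - f^[n] p)) ≤ Real.exp L := by
      apply Real.exp_le_exp.2
      nlinarith [(hmem n).1, hp.2]
    have hDc0 : 0 ≤ D c := by
      have : 0 < D c * (f^[n] v - f^[n] u) := by rw [← h1]; linarith [hh.strictMono l3]
      by_contra hneg
      nlinarith
    have hpos : 0 < f^[n] v - f^[n] u := by linarith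
    have key2 : (h v - h u) * (f^[n] v - f^[n] u) ≤
        (Real.exp L * (v - u) * D c) * (f^[n] v - f^[n] u) := by
      refine key.trans ?_
      have : 0 ≤ D c * (f^[n] v - f^[n] u) * (v - u) :=
        mul_nonneg (mul_nonneg hDc0 hpos.le) (by linarith)
      calc _ ≤ Real.exp L * (D c * (f^[n] v - f^[n] u) * (v - u)) :=
            mul_le_mul_of_nonneg_right hE this
        _ = _ := by ring
    exact le_of_mul_le_mul_right key2 hpos
  choose c hc hc1 using hstep
  have := (lim c hc).const_mul (Real.exp L * (v - u))
  rw [hDa, mul_one] at this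
  exact ge_of_tendsto' this hc1

/-- The form of Kopell's lemma that we need. -/
theorem kopell_down {f g : Equiv.Perm ℝ} (hf : IsDiffI f)
    (hg : ∀ n : ℤ, IsDiffI (g ^ n)) (hcomm : Commute f g) {p : ℝ}
    (hfp : f p < p) (hgp : g p = p) : ∀ u ∈ Icc (f p) p, g u = u := by
  have hp : p ∈ Icc (0:ℝ) 1 := by
    by_contra h
    exact hfp.ne (hf.1 p h)
  obtain ⟨C, hC0, hC⟩ := hf.uniform_bound hp hfp
  have hgz : ∀ n : ℤ, (g ^ n) p = p := fun n =>
    Equiv.Perm.zpow_apply_eq_self_of_apply_eq_self hgp n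
  have hcz : ∀ (n : ℤ) x, (g ^ n) (f x) = f ((g ^ n) x) := by
    intro n x
    have := (hcomm.zpow_right n).eq
    exact (DFunLike.congr_fun this x).symm
  have hgfp : g (f p) = f p := by
    have := hcz 1 p
    simpa [hgp] using this
  -- no point is moved down by a power
  have main : ∀ k : Equiv.Perm ℝ, (∀ n : ℤ, ∃ m : ℤ, k ^ n = g ^ m) → ∀ u ∈ Icc (f p) p,
      ¬ k u < u := by
    intro k hk u hu hlt
    obtain ⟨m1, hm1⟩ := hk 1
    rw [zpow_one] at hm1
    have hkD : IsDiffI k := hm1 ▸ hg m1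
    have hu01 : u ∈ Icc (0:ℝ) 1 := ⟨(hf.mem hp).1.trans hu.1, hu.2.trans hp.2⟩
    obtain ⟨-, -, a, ha, hka, hau, hmax, ht⟩ := hkD.orbit hu01 hlt
    have hkfp : k (f p) = f p := by
      rw [hm1]
      exact Equiv.Perm.zpow_apply_eq_self_of_apply_eq_self hgfp m1
    have hfa : f p ≤ a := hmax _ hu.1 hkfp
    have hb : ∀ n : ℕ, u - a ≤ C * (k^[n] u - a) := by
      intro n
      obtain ⟨m, hm⟩ := hk (-n)
      have hinv : ∀ x, (g ^ m) (k^[n] x) = x := by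
        intro x
        rw [← hm, ← Equiv.Perm.coe_pow]
        rw [← Equiv.Perm.mul_apply, ← zpow_natCast, ← zpow_add]
        simp
      have hmono := (hkD.strictMono.iterate n)
      have hna : k^[n] a = a := Function.iterate_fixed hka n
      have h1 : a < k^[n] u := by
        rw [← hna]; exact hna.symm ▸ hmono hau
      have h2 : k^[n] u ≤ p := by
        have hkp : k p = p := by rw [hm1]; exact hgz m1
        calc k^[n] u ≤ k^[n] p := hmono.monotone hu.2
          _ = p := Function.iterate_fixed hkp n
      have h3 := hC (g ^ m) (hg m) (hcz m) (hgz m) a (k^[n] u) hfa h1 h2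
      rw [hinv u] at h3
      have h4 := hinv a
      rw [hna] at h4
      rwa [h4] at h3
    have hl : Tendsto (fun n : ℕ => C * (k^[n] u - a)) atTop (𝓝 (C * (a - a))) :=
      (ht.sub_const a).const_mul C
    have := ge_of_tendsto' hl hb
    simp at this
    linarith
  intro u hu
  rcases lt_trichotomy (g u) u with h | h | h
  · exact absurd h (main g (fun n => ⟨n, rfl⟩) u hu)
  · exact h
  · refine absurd ?_ (main g⁻¹ (fun n => ⟨-n, by simp⟩) u hu)
    have h0 : IsDiffI g⁻¹ := by simpa using hg (-1)
    have := h0.strictMono h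
    simpa using this

theorem kopell_group {K : Type*} [Group K] (φ : K →* Equiv.Perm ℝ)
    (hφ : Function.Injective φ) (hD : ∀ k, IsDiffI (φ k))
    (hfull : ∀ k : K, φ k ≠ 1 → interior {x | x ∈ Set.Icc (0 : ℝ) 1 ∧ (φ k) x = x} = ∅)
    (a b : K) (hab : Commute a b) (hb : b ≠ 1) (p : ℝ) (hp : φ b p = p) : φ a p = p := by
  have main : ∀ a : K, Commute a b → ¬ φ a p < p := by
    intro a hab hlt
    have hpI : p ∈ Icc (0:ℝ) 1 := by
      by_contra h
      exact hlt.ne ((hD a).1 p h)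
    have h1 := kopell_down (hD a) (fun n => by rw [← map_zpow]; exact hD _) (hab.map φ) hlt hp
    have h2 := hfull b (fun h => hb (hφ (by rw [h, map_one])))
    have h3 : Ioo (φ a p) p ⊆ interior {x | x ∈ Set.Icc (0 : ℝ) 1 ∧ (φ b) x = x} := by
      apply interior_maximal _ isOpen_Ioo
      intro u hu
      exact ⟨⟨((hD a).mem hpI).1.trans hu.1.le, hu.2.le.trans hpI.2⟩, h1 u ⟨hu.1.le, hu.2.le⟩⟩
    rw [h2] at h3
    exact (nonempty_Ioo.2 hlt).not_subset_empty h3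
  rcases lt_trichotomy (φ a p) p with h | h | h
  · exact absurd h (main a hab)
  · exact h
  · refine absurd ?_ (main a⁻¹ hab.inv_left)
    have := (hD a⁻¹).strictMono h
    simpa using this

theorem centralizer_comm {K : Type*} [Group K] (φ : K →* Equiv.Perm ℝ)
    (hφ : Function.Injective φ) (hD : ∀ k, IsDiffI (φ k))
    (hfull : ∀ k : K, φ k ≠ 1 → interior {x | x ∈ Set.Icc (0 : ℝ) 1 ∧ (φ k) x = x} = ∅)
    (f g h : K) (hf : f ≠ 1) (hfg : f * g = g * f) (hfh : f * h = h * f) : g * h = h * g := by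
  have kop := kopell_group φ hφ hD hfull
  obtain ⟨x, hx⟩ : ∃ x, φ f x ≠ x := by
    by_contra hcon
    push Not at hcon
    exact hf (hφ (by rw [map_one]; exact Equiv.ext hcon))
  let C := Subgroup.centralizer ({f} : Set K)
  have hC : ∀ c : C, Commute f (c : K) := fun c =>
    (Subgroup.mem_centralizer_iff.1 c.2) f rfl
  have fixC : ∀ (c : C) (y : ℝ), φ f y = y → φ c y = y := fun c y hy =>
    kop c f (hC c).symm hf y hy
  have free : ∀ (c : C) (y : ℝ), c ≠ 1 → φ c y = y → φ f y = y := fun c y hc hy =>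
    kop f c (hC c) (fun h => hc (Subtype.ext h)) y hy
  have hinj : Function.Injective (fun c : C => φ c x) := by
    intro c d hcd
    by_contra hne
    have h1 : φ ((d⁻¹ * c : C) : K) x = x := by
      have h2 : φ c x = φ d x := hcd
      simp [h2]
    exact hx (free (d⁻¹ * c) x (fun h => hne (inv_mul_eq_one.1 h).symm) h1)
  let _ : LinearOrder C := LinearOrder.lift' (fun c : C => φ c x) hinj
  have lt_def : ∀ c d : C, c < d ↔ φ c x < φ d x := fun c d => Iff.rfl
  have le_def : ∀ c d : C, c ≤ d ↔ φ c x ≤ φ d x := fun c d => Iff.rfl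
  -- sign constancy
  have nofix : ∀ (k : C) (y : ℝ), y ∈ uIcc x (φ k x) → φ f y ≠ y := by
    intro k y hy hfy
    have h1 := fixC k y hfy
    have hxy : x ≠ y := fun h => hx (h ▸ hfy)
    rcases lt_or_gt_of_ne hxy with h | h
    · have := (hD k).strictMono h
      rw [h1] at this
      rcases mem_uIcc.1 hy with h2 | h2 <;> linarith [h2.1, h2.2]
    · have := (hD k).strictMono h
      rw [h1] at this
      rcases mem_uIcc.1 hy with h2 | h2 <;> linarith [h2.1, h2.2]
  have sign : ∀ q k : C, φ q x < x → φ q (φ k x) < φ k x := by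
    intro q k hq
    by_contra hcon
    push Not at hcon
    have hcont : ContinuousOn (fun y => φ q y - y) (uIcc x (φ k x)) :=
      ((hD q).continuous.sub continuous_id).continuousOn
    have h0 : (0:ℝ) ∈ uIcc (φ q x - x) (φ q (φ k x) - φ k x) :=
      mem_uIcc.2 (Or.inl ⟨by linarith, by linarith⟩)
    obtain ⟨y, hy, hy0⟩ := intermediate_value_uIcc hcont h0
    have hq1 : q ≠ 1 := by rintro rfl; simp at hq
    exact nofix k y hy (free q y hq1 (by simpa [sub_eq_zero] using hy0))
  have i1 : MulLeftStrictMono C := ⟨fun k c d hcd => by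
    rw [lt_def] at hcd ⊢
    simpa using (hD k).strictMono hcd⟩
  have i2 : MulRightStrictMono C := ⟨fun k c d hcd => by
    rw [lt_def] at hcd
    show c * k < d * k
    rw [lt_def]
    have h1 : φ ((d⁻¹ * c : C) : K) x < x := by
      have := (hD (d⁻¹ : C)).strictMono hcd
      simpa using this
    have h2 := (hD d).strictMono (sign _ k h1)
    simpa using h2⟩
  have i3 : MulLeftMono C := mulLeftMono_of_mulLeftStrictMono C
  have i4 : MulRightMono C := mulRightMono_of_mulRightStrictMono C
  have arch : ∀ a b : C, 1 < a → ∃ n : ℕ, b ≤ a ^ n := by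
    intro a b ha
    by_contra hcon
    push Not at hcon
    have hmono : Monotone (fun n : ℕ => φ ((a ^ n : C) : K) x) := by
      intro m n hmn
      exact (le_def _ _).1 (pow_le_pow_right' ha.le hmn)
    have hb : BddAbove (range (fun n : ℕ => φ ((a ^ n : C) : K) x)) :=
      ⟨φ b x, by rintro _ ⟨n, rfl⟩; exact ((lt_def _ _).1 (hcon n)).le⟩
    have ht := tendsto_atTop_ciSup hmono hb
    set y := ⨆ n : ℕ, φ ((a ^ n : C) : K) x
    have hay : φ a y = y := by
      apply isFixedPt_of_tendsto_iterate (f := φ a) (x := x) _ (hD a).continuous.continuousAt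
      convert ht using 2 with n
      simp [Equiv.Perm.coe_pow]
    have hfy := free a y ha.ne' hay
    have h1 : φ b y = y := fixC b y hfy
    have h2 : x < y := by
      have h3 : φ ((a ^ 1 : C) : K) x ≤ y := le_ciSup hb 1
      have h4 := (lt_def _ _).1 ha
      rw [pow_one] at h3
      simp at h4
      exact h4.trans_le h3
    have h5 := (hD b).strictMono h2
    rw [h1] at h5
    have h6 : y ≤ φ b x := ciSup_le fun n => ((lt_def _ _).1 (hcon n)).le
    linarith
  have memg : ∀ k : K, f * k = k * f → k ∈ C := fun k hk => by
    rw [Subgroup.mem_centralizer_iff]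
    rintro _ rfl
    exact hk
  exact congrArg Subtype.val (holder_aux arch ⟨g, memg g hfg⟩ ⟨h, memg h hfh⟩)

end

/-- **No fully supported faithful C² actions of finite-index subgroups of `Aut(Fₙ)` on
the interval.** For `n ≥ 6` and `K` a finite-index subgroup of `Aut(Fₙ)`, there is no
injective homomorphism `φ` from `K` into `Diff²₊(I)` such that no nontrivial element
of the image fixes pointwise a nondegenerate interval (i.e., such that each nontrivial
`φ k` has fixed point set of empty interior in `[0,1]`). -/
theorem no_fully_supported_action_of_finite_index_aut (n : ℕ) (hn : 6 ≤ n)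
    (K : Subgroup (MulAut (FreeGroup (Fin n)))) (hK : K.FiniteIndex) :
    ¬ ∃ φ : K →* Equiv.Perm ℝ,
        Function.Injective φ ∧ (∀ k, IsDiffI (φ k)) ∧
        ∀ k : K, φ k ≠ 1 →
          interior {x | x ∈ Set.Icc (0 : ℝ) 1 ∧ (φ k) x = x} = ∅ := by
  rintro ⟨φ, hφ, hD, hfull⟩
  obtain ⟨f, g, h, hf, hfg, hfh, hgh⟩ := group_part n hn K hK
  exact hgh (centralizer_comm φ hφ hD hfull f g h hf hfg hfh)
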